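/- arXiv:2407.19122 — 3 statements merged into one kernel-verified Lean document; each statement's English description precedes it below -/
import Mathlib

section
/- Let R be a commutative integral domain, M an R-module, and Q : QuadraticForm R M an anisotropic quadratic form (Q m = 0 implies m = 0). Assume NoZeroSMulDivisors R (CliffordAlgebra Q). Then every nonzero element a of the multiplicative submonoid Submonoid.closure (Set.range (ι Q)) of CliffordAlgebra Q is neither a left nor a right zero divisor: for every b : CliffordAlgebra Q, a * b = 0 implies b = 0, and b * a = 0 implies b = 0. -/
open CliffordAlgebra
open scoped nonZeroDivisors

theorem isRegular_algebraMap_iff_isSMulRegular {R A : Type*} [CommSemiring R] [Semiring A]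
    [Algebra R A] {r : R} : IsRegular (algebraMap R A r) ↔ IsSMulRegular A r := by
  rw [Commute.isRegular_iff (Algebra.commute_algebraMap_left r), isLeftRegular_iff,
    isSMulRegular_algebraMap_iff]

theorem isRegular_ι_iff_isSMulRegular {R M : Type*} [CommRing R] [AddCommGroup M] [Module R M]
    {Q : QuadraticForm R M} {m : M} :
    IsRegular (ι Q m) ↔ IsSMulRegular (CliffordAlgebra Q) (Q m) := by
  rw [← IsRegular.pow_iff two_pos, sq, ι_sq_scalar, isRegular_algebraMap_iff_isSMulRegular]

theorem submonoid_closure_subset_insert_zero {M₀ : Type*} [MulZeroOneClass M₀] {s : Set M₀}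
    {S : Submonoid M₀} (hs : s ⊆ insert 0 (S : Set M₀)) :
    (Submonoid.closure s : Set M₀) ⊆ insert 0 (S : Set M₀) := by
  intro x hx
  induction hx using Submonoid.closure_induction with
  | mem x hx => exact hs hx
  | one => exact .inr S.one_mem
  | mul x y _ _ hx hy =>
    rcases hx with rfl | hx
    · exact .inl (zero_mul y)
    rcases hy with rfl | hy
    · exact .inl (mul_zero x)
    exact .inr (S.mul_mem hx hy)

theorem clifford_monoid_no_zero_divisors {R M : Type*} [CommRing R] [IsDomain R]
    [AddCommGroup M] [Module R M]
    (Q : QuadraticForm R M) (hQ : ∀ m : M, Q m = 0 → m = 0)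
    [NoZeroSMulDivisors R (CliffordAlgebra Q)]
    (a : CliffordAlgebra Q)
    (ha : a ∈ Submonoid.closure (Set.range (CliffordAlgebra.ι Q)))
    (ha0 : a ≠ 0) :
    ∀ b : CliffordAlgebra Q, (a * b = 0 → b = 0) ∧ (b * a = 0 → b = 0) := by
  have range_ι_subset :
      Set.range (ι Q) ⊆ insert 0 ((CliffordAlgebra Q)⁰ : Set (CliffordAlgebra Q)) := by
    rintro _ ⟨m, rfl⟩
    by_cases hm : Q m = 0
    · exact .inl (by rw [hQ m hm, map_zero])
    · have ι_regular : IsRegular (ι Q m) :=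
        isRegular_ι_iff_isSMulRegular.mpr (IsSMulRegular.of_ne_zero hm)
      exact .inr ι_regular.mem_nonZeroDivisors
  have a_mem : a ∈ (CliffordAlgebra Q)⁰ :=
    (submonoid_closure_subset_insert_zero range_ι_subset ha).resolve_left ha0
  exact fun b => ⟨a_mem.1 b, a_mem.2 b⟩
end

section
/- Let M be a real vector space, Q : QuadraticForm ℝ M a negative definite quadratic form (Q m < 0 for every m ≠ 0), and let Vec := LinearMap.range (Algebra.linearMap ℝ (CliffordAlgebra Q)) ⊔ LinearMap.range (ι Q) be the submodule of Clifford vectors. For all a, c in the multiplicative submonoid Submonoid.closure (Set.range (ι Q)) of CliffordAlgebra Q with c ≠ 0 (so that c is invertible), one has reverse a * c ∈ Vec if and only if a * Ring.inverse c ∈ Vec. -/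
/-!
Since paravectors are fixed by `reverse`, `reverse a * c` is a paravector if and only if
`reverse c * a = reverse c * (a * c⁻¹) * c` is one, so it suffices that, for a product `c` of
paravectors which is a unit, the map `u ↦ reverse c * u * c` preserves and reflects paravectors.

It preserves them because `p * star p` is a scalar for every paravector `p`: by polarization
`p * star v + v * star p` is a scalar too, so `p * star v * p` is a linear combination of `p`
and `v`. It reflects them because composing it with the map attached to `star c` gives
multiplication by the square of the scalar `c * star c`.
-/

/-- The submodule of paravectors (the paper's Clifford vectors) of a Clifford algebra: sums of a
scalar and a vector. -/
def paravectors {R M : Type*} [CommRing R] [AddCommGroup M] [Module R M]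
    (Q : QuadraticForm R M) : Submodule R (CliffordAlgebra Q) :=
  LinearMap.range (Algebra.linearMap R (CliffordAlgebra Q)) ⊔
    LinearMap.range (CliffordAlgebra.ι Q)

/-- The submonoid of a Clifford algebra generated by the paravectors. Over a field, it plays
the role of the Clifford group, which consists of those of its elements that are units. -/
def paravectorMonoid {R M : Type*} [CommRing R] [AddCommGroup M] [Module R M]
    (Q : QuadraticForm R M) : Submonoid (CliffordAlgebra Q) :=
  Submonoid.closure (paravectors Q)

section CommRing

open CliffordAlgebra

variable {R M : Type*} [CommRing R] [AddCommGroup M] [Module R M] {Q : QuadraticForm R M}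

namespace paravectors

theorem mem_iff {x : CliffordAlgebra Q} :
    x ∈ paravectors Q ↔ ∃ (r : R) (m : M), algebraMap R _ r + ι Q m = x := by
  simp only [paravectors, Submodule.mem_sup, LinearMap.mem_range, exists_exists_eq_and,
    Algebra.linearMap_apply]

theorem reverse_eq {p : CliffordAlgebra Q} (hp : p ∈ paravectors Q) : reverse p = p := by
  obtain ⟨r, m, rfl⟩ := mem_iff.mp hp
  rw [map_add, reverse.commutes, reverse_ι]

theorem reverse_mem_iff {x : CliffordAlgebra Q} :
    reverse x ∈ paravectors Q ↔ x ∈ paravectors Q := by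
  refine ⟨fun hx ↦ ?_, fun hx ↦ (reverse_eq hx).symm ▸ hx⟩
  rwa [← reverse_eq hx, reverse_reverse] at hx

theorem star_mem {p : CliffordAlgebra Q} (hp : p ∈ paravectors Q) : star p ∈ paravectors Q := by
  obtain ⟨r, m, rfl⟩ := mem_iff.mp hp
  exact mem_iff.mpr ⟨r, -m, by rw [star_add, star_algebraMap, star_ι, map_neg]⟩

theorem mul_star_self_mem_bot {p : CliffordAlgebra Q} (hp : p ∈ paravectors Q) :
    p * star p ∈ (⊥ : Subalgebra R (CliffordAlgebra Q)) := by
  obtain ⟨r, m, rfl⟩ := mem_iff.mp hp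
  refine Algebra.mem_bot.mpr ⟨r ^ 2 - Q m, ?_⟩
  rw [star_add, star_algebraMap, star_ι, ← sub_eq_add_neg,
    ← (Algebra.commute_algebraMap_left r (ι Q m)).sq_sub_sq, sq (ι Q m), ι_sq_scalar, map_sub,
    map_pow]

theorem mul_star_add_mul_star_mem_bot {p v : CliffordAlgebra Q} (hp : p ∈ paravectors Q)
    (hv : v ∈ paravectors Q) :
    p * star v + v * star p ∈ (⊥ : Subalgebra R (CliffordAlgebra Q)) := by
  have polarization : p * star v + v * star p =
      (p + v) * star (p + v) - p * star p - v * star v := by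
    rw [star_add]
    noncomm_ring
  rw [polarization]
  exact sub_mem (sub_mem (mul_star_self_mem_bot (add_mem hp hv)) (mul_star_self_mem_bot hp))
    (mul_star_self_mem_bot hv)

theorem mul_mul_self_mem {p v : CliffordAlgebra Q} (hp : p ∈ paravectors Q)
    (hv : v ∈ paravectors Q) : p * v * p ∈ paravectors Q := by
  obtain ⟨t, ht⟩ := Algebra.mem_bot.mp (mul_star_add_mul_star_mem_bot hp (star_mem hv))
  obtain ⟨n, hn⟩ := Algebra.mem_bot.mp (mul_star_self_mem_bot (star_mem hp))
  rw [star_star] at ht hn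
  have expansion : p * v * p = t • p - n • star v :=
    calc p * v * p = (p * v + star v * star p) * p - star v * (star p * p) := by noncomm_ring
      _ = t • p - n • star v := by
        rw [← ht, ← hn, ← Algebra.commutes, Algebra.smul_def, Algebra.smul_def]
  rw [expansion]
  exact sub_mem (Submodule.smul_mem _ t hp) (Submodule.smul_mem _ n (star_mem hv))

end paravectors

namespace paravectorMonoid

theorem closure_range_ι_le : Submonoid.closure (Set.range (ι Q)) ≤ paravectorMonoid Q :=
  Submonoid.closure_mono fun _ hx ↦ Submodule.mem_sup_right hx

theorem star_mem {c : CliffordAlgebra Q} (hc : c ∈ paravectorMonoid Q) :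
    star c ∈ paravectorMonoid Q := by
  induction hc using Submonoid.closure_induction with
  | mem p hp => exact Submonoid.subset_closure (paravectors.star_mem hp)
  | one => exact (star_one (CliffordAlgebra Q)).symm ▸ one_mem _
  | mul x y _ _ hx hy => exact star_mul x y ▸ mul_mem hy hx

theorem mul_star_self_mem_bot {c : CliffordAlgebra Q} (hc : c ∈ paravectorMonoid Q) :
    c * star c ∈ (⊥ : Subalgebra R (CliffordAlgebra Q)) := by
  induction hc using Submonoid.closure_induction with
  | mem p hp => exact paravectors.mul_star_self_mem_bot hp
  | one => rw [star_one, one_mul]; exact one_mem _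
  | mul x y _ _ hx hy =>
    obtain ⟨s, hs⟩ := Algebra.mem_bot.mp hy
    have norm_mul : x * y * star (x * y) = y * star y * (x * star x) :=
      calc x * y * star (x * y) = x * (y * star y) * star x := by
            simp only [star_mul, mul_assoc]
        _ = y * star y * (x * star x) := by rw [← hs, ← Algebra.commutes, mul_assoc]
    exact norm_mul ▸ mul_mem hy hx

theorem reverse_mul_mul_mem {c u : CliffordAlgebra Q} (hc : c ∈ paravectorMonoid Q)
    (hu : u ∈ paravectors Q) : reverse c * u * c ∈ paravectors Q := by
  induction hc using Submonoid.closure_induction generalizing u with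
  | mem p hp =>
    rw [paravectors.reverse_eq hp]
    exact paravectors.mul_mul_self_mem hp hu
  | one => rwa [reverse.map_one, one_mul, mul_one]
  | mul x y _ _ hx hy => simpa only [reverse.map_mul, mul_assoc] using hy (hx hu)

end paravectorMonoid

end CommRing

section Field

open CliffordAlgebra

variable {K M : Type*} [Field K] [AddCommGroup M] [Module K M] {Q : QuadraticForm K M}

theorem paravectorMonoid.reverse_mul_mul_mem_iff {c u : CliffordAlgebra Q}
    (hc : c ∈ paravectorMonoid Q) (hc_unit : IsUnit c) :
    reverse c * u * c ∈ paravectors Q ↔ u ∈ paravectors Q := by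
  refine ⟨fun h ↦ ?_, reverse_mul_mul_mem hc⟩
  obtain ⟨n, hn⟩ := Algebra.mem_bot.mp (mul_star_self_mem_bot hc)
  have norm_isUnit : IsUnit (algebraMap K (CliffordAlgebra Q) n) := hn ▸ hc_unit.mul hc_unit.star
  obtain rfl | hn0 := eq_or_ne n 0
  · rw [map_zero, isUnit_zero_iff] at norm_isUnit
    exact eq_zero_of_zero_eq_one norm_isUnit u ▸ zero_mem _
  have composite : reverse (star c) * (reverse c * u * c) * star c = n ^ 2 • u :=
    calc reverse (star c) * (reverse c * u * c) * star c
        = reverse (c * star c) * u * (c * star c) := by simp only [reverse.map_mul, mul_assoc]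
      _ = n ^ 2 • u := by
        rw [← hn, reverse.commutes, ← Algebra.commutes, ← mul_assoc, ← map_mul, ← sq,
          Algebra.smul_def]
  rw [← Submodule.smul_mem_iff _ (pow_ne_zero 2 hn0), ← composite]
  exact reverse_mul_mul_mem (star_mem hc) h

theorem isUnit_of_mem_closure_range_ι {c : CliffordAlgebra Q} (hQ : Q.Anisotropic)
    (hc : c ∈ Submonoid.closure (Set.range (ι Q))) (hc0 : c ≠ 0) : IsUnit c := by
  induction hc using Submonoid.closure_induction with
  | mem x hx =>
    obtain ⟨m, rfl⟩ := hx
    refine isUnit_ι_of_isUnit Q (isUnit_iff_ne_zero.mpr fun hm ↦ hc0 ?_)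
    rw [hQ m hm, map_zero]
  | one => exact isUnit_one
  | mul x y _ _ hx hy =>
    exact (hx (left_ne_zero_of_mul hc0)).mul (hy (right_ne_zero_of_mul hc0))

theorem useful_lemma_general (a : CliffordAlgebra Q) {c : CliffordAlgebra Q}
    (hc : c ∈ paravectorMonoid Q) (hc_unit : IsUnit c) :
    reverse a * c ∈ paravectors Q ↔ a * Ring.inverse c ∈ paravectors Q := by
  have reverse_eq : reverse (reverse a * c) = reverse c * (a * Ring.inverse c) * c := by
    rw [reverse.map_mul, reverse_reverse, mul_assoc, Ring.inverse_mul_cancel_right _ _ hc_unit]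
  rw [← paravectors.reverse_mem_iff, reverse_eq,
    paravectorMonoid.reverse_mul_mul_mem_iff hc hc_unit]

end Field

theorem useful_lemma {M : Type*} [AddCommGroup M] [Module ℝ M]
    (Q : QuadraticForm ℝ M) (hQ : ∀ m : M, m ≠ 0 → Q m < 0)
    (a c : CliffordAlgebra Q)
    (ha : a ∈ Submonoid.closure (Set.range (CliffordAlgebra.ι Q)))
    (hc : c ∈ Submonoid.closure (Set.range (CliffordAlgebra.ι Q)))
    (hc0 : c ≠ 0) :
    CliffordAlgebra.reverse a * c ∈
        LinearMap.range (Algebra.linearMap ℝ (CliffordAlgebra Q)) ⊔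
          LinearMap.range (CliffordAlgebra.ι Q) ↔
      a * Ring.inverse c ∈
        LinearMap.range (Algebra.linearMap ℝ (CliffordAlgebra Q)) ⊔
          LinearMap.range (CliffordAlgebra.ι Q) := by
  have anisotropic : Q.Anisotropic := fun m hm ↦ by_contra fun hm0 ↦ (hQ m hm0).ne hm
  exact useful_lemma_general a (paravectorMonoid.closure_range_ι_le hc)
    (isUnit_of_mem_closure_range_ι anisotropic hc hc0)
end

section
/- Let R be a commutative ring, M an R-module, and Q : QuadraticForm R M. Let H : QuadraticForm R (R × R) satisfy H (y, z) = y * z for all (y, z), let N : QuadraticForm R R satisfy N t = -t^2 for all t, and set Q' := (Q.prod H).prod N. Then there exists an R-algebra isomorphism ψ from Matrix (Fin 2) (Fin 2) (CliffordAlgebra Q) onto the even subalgebra CliffordAlgebra.even Q' such that for all a, b, c, d : CliffordAlgebra Q, the image under ψ of the Clifford adjugate !![reverse d, -reverse b; -reverse c, reverse a] equals reverse (ψ !![a, b; c, d]) as elements of CliffordAlgebra Q'. -/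
/-!
A vector `(m, (y, z))` acts as the matrix `(ι m, y; z, -ι m)`, whose square is `Q m + y z`; this
represents the Clifford algebra of `Q ⊕ H` on `2 × 2` matrices over that of `Q`. In the other
direction, the isotropic vectors `e`, `f` of `H` multiply like the off-diagonal matrix units, and
`⁅e, f⁆ = e f - f e` squares to one, anticommutes with `e` and `f`, and commutes with the vectors
of `Q`. Hence the twisted vectors `m ⁅e, f⁆` still square to `Q m` but now commute with `e` and
`f`, so they generate a copy of the Clifford algebra of `Q` that plays the role of the scalar
matrices. The Clifford adjugate and `reverse ∘ involute` are both anti-automorphisms, so they are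
compared on vectors, where each is negation. Mathlib's `CliffordAlgebra.equivEven`, which takes
`reverse ∘ involute` to `reverse`, supplies the second half of the periodicity.
-/

open CliffordAlgebra

namespace BottPeriodicity

theorem commute_of_commute_ι {R M B : Type*} [CommRing R] [AddCommGroup M] [Module R M] [Ring B]
    [Algebra R B] {Q : QuadraticForm R M} {φ : CliffordAlgebra Q →ₐ[R] B} {x : B}
    (hφ : ∀ m, Commute (φ (ι Q m)) x) (a : CliffordAlgebra Q) : Commute (φ a) x := by
  induction a using CliffordAlgebra.induction with
  | algebraMap r => rw [AlgHom.commutes]; exact Algebra.commutes r x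
  | ι m => exact hφ m
  | mul a b ha hb => rw [map_mul]; exact ha.mul_left hb
  | add a b ha hb => rw [map_add]; exact ha.add_left hb

/-- A pair of ring elements satisfying the relations of the standard isotropic basis of a
hyperbolic plane in its Clifford algebra, which are also the relations between the two off-diagonal
`2 × 2` matrix units. -/
structure IsHyperbolicPair {B : Type*} [Ring B] (e f : B) : Prop where
  left_mul_self : e * e = 0
  right_mul_self : f * f = 0
  mul_add_swap : e * f + f * e = 1

namespace IsHyperbolicPair

section Ring

variable {B : Type*} [Ring B] {e f x : B}

theorem symm (h : IsHyperbolicPair e f) : IsHyperbolicPair f e :=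
  ⟨h.right_mul_self, h.left_mul_self, by rw [add_comm, h.mul_add_swap]⟩

theorem left_mul_right_mul_left (h : IsHyperbolicPair e f) : e * (f * e) = e := by
  rw [eq_sub_of_add_eq' h.mul_add_swap, mul_sub, mul_one, ← mul_assoc, h.left_mul_self, zero_mul,
    sub_zero]

theorem lie_mul_left (h : IsHyperbolicPair e f) : ⁅e, f⁆ * e = e := by
  rw [Ring.lie_def, sub_mul, mul_assoc, mul_assoc, h.left_mul_right_mul_left, h.left_mul_self,
    mul_zero, sub_zero]

theorem left_mul_lie (h : IsHyperbolicPair e f) : e * ⁅e, f⁆ = -e := by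
  rw [Ring.lie_def, mul_sub, ← mul_assoc, h.left_mul_right_mul_left, h.left_mul_self, zero_mul,
    zero_sub]

theorem lie_mul_right (h : IsHyperbolicPair e f) : ⁅e, f⁆ * f = -f := by
  rw [Ring.lie_def, ← neg_sub, ← Ring.lie_def, neg_mul, h.symm.lie_mul_left]

theorem lie_mul_lie (h : IsHyperbolicPair e f) : ⁅e, f⁆ * ⁅e, f⁆ = 1 :=
  calc ⁅e, f⁆ * ⁅e, f⁆ = ⁅e, f⁆ * e * f - ⁅e, f⁆ * f * e := by
        rw [Ring.lie_def e f, mul_sub, mul_assoc, mul_assoc]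
    _ = e * f + f * e := by rw [h.lie_mul_left, h.lie_mul_right, neg_mul, sub_neg_eq_add]
    _ = 1 := h.mul_add_swap

theorem commute_mul_lie_left (h : IsHyperbolicPair e f) (hxe : x * e = -(e * x)) :
    Commute (x * ⁅e, f⁆) e :=
  calc x * ⁅e, f⁆ * e = x * e := by rw [mul_assoc, h.lie_mul_left]
    _ = -(x * (e * ⁅e, f⁆)) := by rw [h.left_mul_lie, mul_neg, neg_neg]
    _ = e * (x * ⁅e, f⁆) := by rw [← mul_assoc, hxe, neg_mul, neg_neg, mul_assoc]

theorem commute_mul_lie_right (h : IsHyperbolicPair e f) (hxf : x * f = -(f * x)) :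
    Commute (x * ⁅e, f⁆) f := by
  rw [Ring.lie_def, ← neg_sub, ← Ring.lie_def, mul_neg]
  exact (h.symm.commute_mul_lie_left hxf).neg_left

theorem mul_lie_mul_self (h : IsHyperbolicPair e f) (hxe : x * e = -(e * x))
    (hxf : x * f = -(f * x)) : x * ⁅e, f⁆ * (x * ⁅e, f⁆) = x * x := by
  have hcomm : Commute (x * ⁅e, f⁆) ⁅e, f⁆ :=
    have he := h.commute_mul_lie_left hxe
    have hf := h.commute_mul_lie_right hxf
    (he.mul_right hf).sub_right (hf.mul_right he)
  calc x * ⁅e, f⁆ * (x * ⁅e, f⁆) = x * (⁅e, f⁆ * (x * ⁅e, f⁆)) := mul_assoc _ _ _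
    _ = x * (x * (⁅e, f⁆ * ⁅e, f⁆)) := by rw [← hcomm.eq, mul_assoc x ⁅e, f⁆]
    _ = x * x := by rw [h.lie_mul_lie, mul_one]

end Ring

variable {R M A B : Type*} [CommRing R] [Ring B] [Algebra R B] {e f : B}

section MatrixLift

variable [Ring A] [Algebra R A]

/-- The algebra homomorphism out of `2 × 2` matrices that extends `j` on scalar matrices and sends
the off-diagonal matrix units to `e` and `f`. -/
def matrixLift (h : IsHyperbolicPair e f) (j : A →ₐ[R] B) (hje : ∀ a, Commute (j a) e)
    (hjf : ∀ a, Commute (j a) f) : Matrix (Fin 2) (Fin 2) A →ₐ[R] B :=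
  AlgHom.ofLinearMap
    { toFun := fun X => j (X 0 0) * (e * f) + j (X 0 1) * e + j (X 1 0) * f + j (X 1 1) * (f * e)
      map_add' := fun X Y => by
        simp only [Matrix.add_apply, map_add, add_mul]
        abel
      map_smul' := fun r X => by
        simp only [Matrix.smul_apply, map_smul, smul_mul_assoc, smul_add, RingHom.id_apply] }
    (by simp [h.mul_add_swap])
    (fun X Y => by
      have hee (x : B) : e * (e * x) = 0 := by rw [← mul_assoc, h.left_mul_self, zero_mul]
      have hff (x : B) : f * (f * x) = 0 := by rw [← mul_assoc, h.right_mul_self, zero_mul]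
      have hej (a : A) (x : B) : e * (j a * x) = j a * (e * x) := ((hje a).left_comm x).symm
      have hfj (a : A) (x : B) : f * (j a * x) = j a * (f * x) := ((hjf a).left_comm x).symm
      simp only [LinearMap.coe_mk, AddHom.coe_mk, Matrix.mul_apply, Fin.sum_univ_two, map_add,
        map_mul, add_mul, mul_add, mul_assoc, hej, hfj, h.left_mul_self, h.right_mul_self, hee,
        hff, h.left_mul_right_mul_left, h.symm.left_mul_right_mul_left, mul_zero]
      abel)

theorem matrixLift_apply (h : IsHyperbolicPair e f) (j : A →ₐ[R] B)
    (hje : ∀ a, Commute (j a) e) (hjf : ∀ a, Commute (j a) f) (X : Matrix (Fin 2) (Fin 2) A) :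
    h.matrixLift j hje hjf X =
      j (X 0 0) * (e * f) + j (X 0 1) * e + j (X 1 0) * f + j (X 1 1) * (f * e) :=
  rfl

end MatrixLift

variable [AddCommGroup M] [Module R M] {Q : QuadraticForm R M} {g : M →ₗ[R] B}

/-- The homomorphism `ι m ↦ g m * ⁅e, f⁆` out of a Clifford algebra, for a Clifford map `g` whose
values anticommute with `e` and `f`; the twist by `⁅e, f⁆` makes its values commute with them. -/
def twistedLift (h : IsHyperbolicPair e f) (hg : ∀ m, g m * g m = algebraMap R B (Q m))
    (hge : ∀ m, g m * e = -(e * g m)) (hgf : ∀ m, g m * f = -(f * g m)) :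
    CliffordAlgebra Q →ₐ[R] B :=
  CliffordAlgebra.lift Q ⟨LinearMap.mulRight R ⁅e, f⁆ ∘ₗ g, fun m =>
    (h.mul_lie_mul_self (hge m) (hgf m)).trans (hg m)⟩

variable (h : IsHyperbolicPair e f) (hg : ∀ m, g m * g m = algebraMap R B (Q m))
  (hge : ∀ m, g m * e = -(e * g m)) (hgf : ∀ m, g m * f = -(f * g m))

@[simp]
theorem twistedLift_ι (m : M) : h.twistedLift hg hge hgf (ι Q m) = g m * ⁅e, f⁆ :=
  CliffordAlgebra.lift_ι_apply _ _ _

theorem twistedLift_commute_left (a : CliffordAlgebra Q) :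
    Commute (h.twistedLift hg hge hgf a) e :=
  commute_of_commute_ι (fun m => by
    rw [twistedLift_ι]; exact h.commute_mul_lie_left (hge m)) a

theorem twistedLift_commute_right (a : CliffordAlgebra Q) :
    Commute (h.twistedLift hg hge hgf a) f :=
  commute_of_commute_ι (fun m => by
    rw [twistedLift_ι]; exact h.commute_mul_lie_right (hgf m)) a

end IsHyperbolicPair

variable {R M : Type*} [CommRing R] [AddCommGroup M] [Module R M]

theorem isHyperbolicPair_ι {Q : QuadraticForm R M} {u v : M} (hu : Q u = 0) (hv : Q v = 0)
    (huv : QuadraticMap.polar Q u v = 1) : IsHyperbolicPair (ι Q u) (ι Q v) where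
  left_mul_self := by rw [ι_sq_scalar, hu, map_zero]
  right_mul_self := by rw [ι_sq_scalar, hv, map_zero]
  mul_add_swap := by rw [ι_mul_ι_add_swap, huv, map_one]

variable (R) in
/-- The hyperbolic plane: the quadratic form `(y, z) ↦ y * z`. -/
def hyperbolicPlane : QuadraticForm R (R × R) :=
  QuadraticMap.linMulLin (LinearMap.fst R R R) (LinearMap.snd R R R)

@[simp]
theorem hyperbolicPlane_apply (v : R × R) : hyperbolicPlane R v = v.1 * v.2 :=
  rfl

variable (Q : QuadraticForm R M)

/-- The Clifford adjugate of a `2 × 2` matrix over a Clifford algebra. -/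
def cliffordAdjugate (X : Matrix (Fin 2) (Fin 2) (CliffordAlgebra Q)) :
    Matrix (Fin 2) (Fin 2) (CliffordAlgebra Q) :=
  !![reverse (X 1 1), -reverse (X 0 1); -reverse (X 1 0), reverse (X 0 0)]

theorem cliffordAdjugate_of (a b c d : CliffordAlgebra Q) :
    cliffordAdjugate Q !![a, b; c, d] = !![reverse d, -reverse b; -reverse c, reverse a] :=
  rfl

theorem cliffordAdjugate_add (X Y : Matrix (Fin 2) (Fin 2) (CliffordAlgebra Q)) :
    cliffordAdjugate Q (X + Y) = cliffordAdjugate Q X + cliffordAdjugate Q Y := by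
  ext i j
  fin_cases i <;> fin_cases j <;> simp [cliffordAdjugate, add_comm]

theorem cliffordAdjugate_mul (X Y : Matrix (Fin 2) (Fin 2) (CliffordAlgebra Q)) :
    cliffordAdjugate Q (X * Y) = cliffordAdjugate Q Y * cliffordAdjugate Q X := by
  ext i j
  fin_cases i <;> fin_cases j <;>
    simp [cliffordAdjugate, Matrix.mul_apply, Fin.sum_univ_two, add_comm]

theorem cliffordAdjugate_algebraMap (r : R) :
    cliffordAdjugate Q (algebraMap R _ r) = algebraMap R _ r := by
  ext i j
  fin_cases i <;> fin_cases j <;> simp [cliffordAdjugate, Matrix.algebraMap_matrix_apply]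

/-- The matrix `(ι m, y; z, -ι m)` by which a vector `(m, (y, z))` of `Q ⊕ H` acts. -/
def vectorMatrix : M × R × R →ₗ[R] Matrix (Fin 2) (Fin 2) (CliffordAlgebra Q) where
  toFun v := !![ι Q v.1, algebraMap R _ v.2.1; algebraMap R _ v.2.2, -ι Q v.1]
  map_add' v w := by
    ext i j
    fin_cases i <;> fin_cases j <;> simp [add_comm]
  map_smul' r v := by
    ext i j
    fin_cases i <;> fin_cases j <;> simp [Algebra.smul_def]

theorem vectorMatrix_apply (v : M × R × R) :
    vectorMatrix Q v = !![ι Q v.1, algebraMap R _ v.2.1; algebraMap R _ v.2.2, -ι Q v.1] :=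
  rfl

theorem vectorMatrix_mul_self (v : M × R × R) :
    vectorMatrix Q v * vectorMatrix Q v =
      algebraMap R _ (Q.prod (hyperbolicPlane R) v) := by
  obtain ⟨m, y, z⟩ := v
  ext i j
  fin_cases i <;> fin_cases j <;>
    simp [vectorMatrix_apply, Matrix.mul_apply, Fin.sum_univ_two, Matrix.algebraMap_matrix_apply,
      ← Algebra.commutes y (ι Q m), ← Algebra.commutes z (ι Q m), add_comm,
      ← Algebra.commutes y (algebraMap R (CliffordAlgebra Q) z)]

theorem cliffordAdjugate_vectorMatrix (v : M × R × R) :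
    cliffordAdjugate Q (vectorMatrix Q v) = -vectorMatrix Q v := by
  ext i j
  fin_cases i <;> fin_cases j <;> simp [cliffordAdjugate, vectorMatrix_apply]

/-- The representation of the Clifford algebra of `Q ⊕ H` by `2 × 2` matrices over the Clifford
algebra of `Q`. -/
def toMatrix : CliffordAlgebra (Q.prod (hyperbolicPlane R)) →ₐ[R]
    Matrix (Fin 2) (Fin 2) (CliffordAlgebra Q) :=
  CliffordAlgebra.lift _ ⟨vectorMatrix Q, vectorMatrix_mul_self Q⟩

@[simp]
theorem toMatrix_ι (v : M × R × R) :
    toMatrix Q (ι (Q.prod (hyperbolicPlane R)) v) = vectorMatrix Q v :=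
  CliffordAlgebra.lift_ι_apply _ _ _

theorem toMatrix_reverse_involute (x : CliffordAlgebra (Q.prod (hyperbolicPlane R))) :
    toMatrix Q (reverse (involute x)) = cliffordAdjugate Q (toMatrix Q x) := by
  induction x using CliffordAlgebra.induction with
  | algebraMap r => simp only [AlgHom.commutes, reverse.commutes, cliffordAdjugate_algebraMap]
  | ι v =>
    simp only [involute_ι, map_neg, reverse_ι, toMatrix_ι, cliffordAdjugate_vectorMatrix]
  | mul x y hx hy => simp only [map_mul, reverse.map_mul, cliffordAdjugate_mul, hx, hy]
  | add x y hx hy => simp only [map_add, cliffordAdjugate_add, hx, hy]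

/-- The first isotropic basis vector of the hyperbolic summand of `Q ⊕ H`. -/
def isotropicFst : CliffordAlgebra (Q.prod (hyperbolicPlane R)) := ι _ (0, 1, 0)

/-- The second isotropic basis vector of the hyperbolic summand of `Q ⊕ H`. -/
def isotropicSnd : CliffordAlgebra (Q.prod (hyperbolicPlane R)) := ι _ (0, 0, 1)

theorem isHyperbolicPair_isotropic : IsHyperbolicPair (isotropicFst Q) (isotropicSnd Q) :=
  isHyperbolicPair_ι (by simp) (by simp) (by simp [QuadraticMap.polar])

theorem toMatrix_isotropicFst : toMatrix Q (isotropicFst Q) = !![0, 1; 0, 0] := by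
  simp [isotropicFst, vectorMatrix_apply]

theorem toMatrix_isotropicSnd : toMatrix Q (isotropicSnd Q) = !![0, 0; 1, 0] := by
  simp [isotropicSnd, vectorMatrix_apply]

/-- The vectors of the summand `Q` in the Clifford algebra of `Q ⊕ H`. -/
def inlι : M →ₗ[R] CliffordAlgebra (Q.prod (hyperbolicPlane R)) :=
  ι _ ∘ₗ LinearMap.inl R M (R × R)

theorem ι_eq_inlι_add (m : M) (y z : R) :
    ι (Q.prod (hyperbolicPlane R)) (m, y, z) =
      inlι Q m + y • isotropicFst Q + z • isotropicSnd Q := by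
  simp [inlι, isotropicFst, isotropicSnd, ← map_smul, ← map_add]

theorem toMatrix_inlι (m : M) : toMatrix Q (inlι Q m) = !![ι Q m, 0; 0, -ι Q m] := by
  simp [inlι, vectorMatrix_apply]

theorem inlι_mul_self (m : M) : inlι Q m * inlι Q m = algebraMap R _ (Q m) :=
  (ι_sq_scalar _ _).trans (by simp)

theorem inlι_mul_isotropicFst (m : M) :
    inlι Q m * isotropicFst Q = -(isotropicFst Q * inlι Q m) :=
  ι_mul_ι_comm_of_isOrtho (QuadraticMap.IsOrtho.inl_inr _ _)

theorem inlι_mul_isotropicSnd (m : M) :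
    inlι Q m * isotropicSnd Q = -(isotropicSnd Q * inlι Q m) :=
  ι_mul_ι_comm_of_isOrtho (QuadraticMap.IsOrtho.inl_inr _ _)

/-- The copy of the Clifford algebra of `Q` inside that of `Q ⊕ H` that corresponds to the scalar
matrices. It centralises the hyperbolic plane, unlike the copy induced by the inclusion of `Q`. -/
def scalarHom : CliffordAlgebra Q →ₐ[R] CliffordAlgebra (Q.prod (hyperbolicPlane R)) :=
  (isHyperbolicPair_isotropic Q).twistedLift (inlι_mul_self Q) (inlι_mul_isotropicFst Q)
    (inlι_mul_isotropicSnd Q)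

theorem scalarHom_ι (m : M) :
    scalarHom Q (ι Q m) = inlι Q m * ⁅isotropicFst Q, isotropicSnd Q⁆ :=
  IsHyperbolicPair.twistedLift_ι _ _ _ _ m

theorem toMatrix_comp_scalarHom :
    (toMatrix Q).comp (scalarHom Q) = Matrix.scalarAlgHom (Fin 2) R := by
  refine CliffordAlgebra.hom_ext (LinearMap.ext fun m => ?_)
  simp only [LinearMap.comp_apply, AlgHom.toLinearMap_apply, AlgHom.comp_apply, scalarHom_ι,
    Ring.lie_def, map_mul, map_sub, toMatrix_isotropicFst, toMatrix_isotropicSnd, toMatrix_inlι]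
  ext i j
  fin_cases i <;> fin_cases j <;> simp

theorem toMatrix_scalarHom (a : CliffordAlgebra Q) :
    toMatrix Q (scalarHom Q a) = Matrix.scalar (Fin 2) a :=
  DFunLike.congr_fun (toMatrix_comp_scalarHom Q) a

/-- The inverse of `toMatrix`. -/
def ofMatrix : Matrix (Fin 2) (Fin 2) (CliffordAlgebra Q) →ₐ[R]
    CliffordAlgebra (Q.prod (hyperbolicPlane R)) :=
  (isHyperbolicPair_isotropic Q).matrixLift (scalarHom Q)
    (IsHyperbolicPair.twistedLift_commute_left _ _ _ _)
    (IsHyperbolicPair.twistedLift_commute_right _ _ _ _)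

theorem ofMatrix_of (a b c d : CliffordAlgebra Q) :
    ofMatrix Q !![a, b; c, d] =
      scalarHom Q a * (isotropicFst Q * isotropicSnd Q) + scalarHom Q b * isotropicFst Q +
        scalarHom Q c * isotropicSnd Q + scalarHom Q d * (isotropicSnd Q * isotropicFst Q) :=
  IsHyperbolicPair.matrixLift_apply _ _ _ _ _

theorem ofMatrix_comp_toMatrix : (ofMatrix Q).comp (toMatrix Q) = AlgHom.id R _ := by
  refine CliffordAlgebra.hom_ext (LinearMap.ext fun ⟨m, y, z⟩ => ?_)
  have hm : scalarHom Q (ι Q m) * ⁅isotropicFst Q, isotropicSnd Q⁆ = inlι Q m := by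
    rw [scalarHom_ι, mul_assoc, (isHyperbolicPair_isotropic Q).lie_mul_lie, mul_one]
  simp only [LinearMap.comp_apply, AlgHom.toLinearMap_apply, AlgHom.comp_apply, toMatrix_ι,
    AlgHom.id_apply, vectorMatrix_apply, ofMatrix_of, AlgHom.commutes, ← Algebra.smul_def, map_neg,
    neg_mul]
  rw [ι_eq_inlι_add, ← hm, Ring.lie_def, mul_sub]
  abel

theorem toMatrix_comp_ofMatrix : (toMatrix Q).comp (ofMatrix Q) = AlgHom.id R _ := by
  ext X i j
  rw [AlgHom.comp_apply, Matrix.eta_fin_two X, ofMatrix_of]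
  simp only [map_add, map_mul, toMatrix_scalarHom, toMatrix_isotropicFst, toMatrix_isotropicSnd,
    AlgHom.id_apply]
  fin_cases i <;> fin_cases j <;> simp [Matrix.mul_apply, Fin.sum_univ_two]

/-- The first Bott periodicity map: adding a hyperbolic plane to a quadratic form replaces its
Clifford algebra by the `2 × 2` matrices over it. -/
def matrixEquiv : Matrix (Fin 2) (Fin 2) (CliffordAlgebra Q) ≃ₐ[R]
    CliffordAlgebra (Q.prod (hyperbolicPlane R)) :=
  AlgEquiv.ofAlgHom (ofMatrix Q) (toMatrix Q) (ofMatrix_comp_toMatrix Q) (toMatrix_comp_ofMatrix Q)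

theorem matrixEquiv_cliffordAdjugate (X : Matrix (Fin 2) (Fin 2) (CliffordAlgebra Q)) :
    matrixEquiv Q (cliffordAdjugate Q X) = reverse (involute (matrixEquiv Q X)) := by
  rw [← AlgEquiv.eq_symm_apply]
  calc cliffordAdjugate Q X
      = cliffordAdjugate Q (toMatrix Q (matrixEquiv Q X)) :=
        congrArg _ ((matrixEquiv Q).symm_apply_apply X).symm
    _ = (matrixEquiv Q).symm (reverse (involute (matrixEquiv Q X))) :=
        (toMatrix_reverse_involute Q _).symm

end BottPeriodicity

open BottPeriodicity

theorem arithmetic_bott_periodicity {R M : Type*} [CommRing R] [AddCommGroup M] [Module R M]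
    (Q : QuadraticForm R M)
    (H : QuadraticForm R (R × R)) (hH : ∀ y z : R, H (y, z) = y * z)
    (N : QuadraticForm R R) (hN : ∀ t : R, N t = -t ^ 2) :
    ∃ ψ : Matrix (Fin 2) (Fin 2) (CliffordAlgebra Q) ≃ₐ[R]
        CliffordAlgebra.even ((Q.prod H).prod N),
      ∀ a b c d : CliffordAlgebra Q,
        (ψ !![CliffordAlgebra.reverse d, -CliffordAlgebra.reverse b;
              -CliffordAlgebra.reverse c, CliffordAlgebra.reverse a] :
            CliffordAlgebra ((Q.prod H).prod N)) =
          CliffordAlgebra.reverse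
            ((ψ !![a, b; c, d] : CliffordAlgebra ((Q.prod H).prod N))) := by
  obtain rfl : H = hyperbolicPlane R := QuadraticMap.ext fun v => hH v.1 v.2
  obtain rfl : N = -QuadraticMap.sq := QuadraticMap.ext fun t => by simp [hN, sq]
  refine ⟨(matrixEquiv Q).trans (equivEven (Q.prod (hyperbolicPlane R))), fun a b c d => ?_⟩
  rw [← cliffordAdjugate_of, AlgEquiv.trans_apply, matrixEquiv_cliffordAdjugate]
  exact coe_toEven_reverse_involute (Q.prod (hyperbolicPlane R)) (matrixEquiv Q !![a, b; c, d])
end
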